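/- Let N_1,…,N_n be positive integers. If there exist integers α_1,…,α_n, not all zero, with |α_i| ≤ N_i + 1 for all i and |α_i| = N_i + 1 for at most one index i, such that α_1γ_1 + ⋯ + α_nγ_n = 0, then there exists a nonzero vector v ∈ L(K;(γ_1,…,γ_n)) with ‖v‖² < 2·max_i N_i + 1 + (1 + Σ_{i=1}^n N_i)² + Σ_{i=1}^n N_i². -/

import Mathlib

/-- Membership in the lattice `L(K; (γ_1, …, γ_n)) ⊆ ℤ^{n+1}`: the vectors
`(a_1, …, a_n, K(a_1 γ_1' + ⋯ + a_n γ_n'))` with `a_i ∈ ℤ`, where `γ_i' = ⌊K γ_i⌋ / K`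
(so the last coordinate is `∑ i, a_i ⌊K γ_i⌋`). -/
def inLattice (K : ℕ) {n : ℕ} (γ : Fin n → ℝ) (v : Fin (n + 1) → ℤ) : Prop :=
  ∃ a : Fin n → ℤ, (∀ i : Fin n, v i.castSucc = a i) ∧
    v (Fin.last n) = ∑ i, a i * ⌊(K : ℝ) * γ i⌋

/-!
Since `∑ i, α i * γ i = 0`, replacing each `K * γ i` by its floor costs only fractional parts: the
last coordinate of the lattice vector with coefficients `α` is `-∑ i, α i * Int.fract (K * γ i)`,
which is strictly smaller than `∑ i, |α i|` in absolute value. As `|α i| ≤ N i` outside a single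
index `m`, where `|α m| ≤ N m + 1`, the sum of the `|α i|` exceeds `∑ i, N i` by at most `1`, and
the sum of the `α i ^ 2` exceeds `∑ i, N i ^ 2` by at most `(N m + 1) ^ 2 - N m ^ 2 = 2 * N m + 1`.
-/

section ExceptionalIndex

variable {ι : Type*}

theorem exists_forall_ne_le_of_le_add_one [Nonempty ι] {f g : ι → ℤ}
    (hle : ∀ i, f i ≤ g i + 1)
    (heq : ∀ i j, f i = g i + 1 → f j = g j + 1 → i = j) :
    ∃ m, ∀ i ≠ m, f i ≤ g i := by
  by_cases hex : ∃ m, f m = g m + 1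
  · obtain ⟨m, hm⟩ := hex
    refine ⟨m, fun i him => Int.le_of_lt_add_one <| (hle i).lt_of_ne fun hi => ?_⟩
    exact him (heq i m hi hm)
  · exact ⟨Classical.arbitrary ι, fun i _ =>
      Int.le_of_lt_add_one <| (hle i).lt_of_ne fun hi => hex ⟨i, hi⟩⟩

theorem sum_le_add_sum_of_forall_ne_le {M : Type*} [AddCommMonoid M] [PartialOrder M]
    [IsOrderedAddMonoid M] {s : Finset ι} {f g : ι → M} {m : ι} {c : M} (hms : m ∈ s)
    (hm : f m ≤ c + g m) (hne : ∀ i ∈ s, i ≠ m → f i ≤ g i) :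
    ∑ i ∈ s, f i ≤ c + ∑ i ∈ s, g i := by
  classical
  have herase : ∑ i ∈ s.erase m, f i ≤ ∑ i ∈ s.erase m, g i :=
    Finset.sum_le_sum fun i hi => hne i (Finset.mem_of_mem_erase hi) (Finset.ne_of_mem_erase hi)
  rw [← Finset.add_sum_erase s f hms, ← Finset.add_sum_erase s g hms, ← add_assoc]
  exact add_le_add hm herase

theorem sum_sq_le_add_sum_sq_of_forall_ne_abs_le {R : Type*} [CommRing R] [LinearOrder R]
    [IsStrictOrderedRing R] {s : Finset ι} {a b : ι → R} {m : ι} (hms : m ∈ s)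
    (hm : |a m| ≤ b m + 1) (hne : ∀ i ∈ s, i ≠ m → |a i| ≤ b i) :
    ∑ i ∈ s, a i ^ 2 ≤ 2 * b m + 1 + ∑ i ∈ s, b i ^ 2 := by
  refine sum_le_add_sum_of_forall_ne_le hms ?_ fun i hi him => ?_
  · calc a m ^ 2 = |a m| ^ 2 := (sq_abs _).symm
      _ ≤ (b m + 1) ^ 2 := by gcongr
      _ = 2 * b m + 1 + b m ^ 2 := by ring
  · exact sq_le_sq.mpr ((hne i hi him).trans (le_abs_self _))

end ExceptionalIndex

section IntegerRelation

variable {ι R : Type*} [Ring R] [LinearOrder R] [FloorRing R] {s : Finset ι} {a : ι → ℤ} {x : ι → R}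

theorem cast_sum_mul_floor_eq_neg_sum_mul_fract (hrel : ∑ i ∈ s, (a i : R) * x i = 0) :
    ((∑ i ∈ s, a i * ⌊x i⌋ : ℤ) : R) = -∑ i ∈ s, a i * Int.fract (x i) := by
  rw [eq_neg_iff_add_eq_zero, ← hrel]
  push_cast
  simp only [← Finset.sum_add_distrib, ← mul_add, Int.floor_add_fract]

theorem abs_sum_mul_floor_lt_sum_abs [IsStrictOrderedRing R] (ha : ∃ i ∈ s, a i ≠ 0)
    (hrel : ∑ i ∈ s, (a i : R) * x i = 0) :
    |∑ i ∈ s, a i * ⌊x i⌋| < ∑ i ∈ s, |a i| := by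
  obtain ⟨k, hks, hk⟩ := ha
  have habs : (0 : R) < |(a k : R)| := abs_pos.mpr (Int.cast_ne_zero.mpr hk)
  rw [← Int.cast_lt (R := R), Int.cast_abs, cast_sum_mul_floor_eq_neg_sum_mul_fract hrel, abs_neg]
  calc |∑ i ∈ s, (a i : R) * Int.fract (x i)|
      ≤ ∑ i ∈ s, |(a i : R) * Int.fract (x i)| := Finset.abs_sum_le_sum_abs _ _
    _ = ∑ i ∈ s, |(a i : R)| * Int.fract (x i) := by simp only [abs_mul, Int.abs_fract]
    _ < ∑ i ∈ s, |(a i : R)| := Finset.sum_lt_sum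
        (fun i _ => mul_le_of_le_one_right (abs_nonneg _) (Int.fract_lt_one _).le)
        ⟨k, hks, mul_lt_of_lt_one_right habs (Int.fract_lt_one _)⟩
    _ = ((∑ i ∈ s, |a i| : ℤ) : R) := by push_cast; rfl

end IntegerRelation

/-- The vector of the lattice `L(K; γ)` with coefficients `a`. Its last coordinate
`K (a_1 γ_1' + ⋯ + a_n γ_n')` is encoded as the integer `∑ i, a i * ⌊K * γ i⌋`. -/
noncomputable def latticeVector (K : ℕ) {n : ℕ} (γ : Fin n → ℝ) (a : Fin n → ℤ) : Fin (n + 1) → ℤ :=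
  Fin.snoc (α := fun _ => ℤ) a (∑ i, a i * ⌊(K : ℝ) * γ i⌋)

section LatticeVector

variable (K : ℕ) {n : ℕ} (γ : Fin n → ℝ) (a : Fin n → ℤ)

@[simp]
theorem latticeVector_castSucc (i : Fin n) : latticeVector K γ a i.castSucc = a i :=
  Fin.snoc_castSucc (α := fun _ => ℤ) _ _ _

@[simp]
theorem latticeVector_last : latticeVector K γ a (Fin.last n) = ∑ i, a i * ⌊(K : ℝ) * γ i⌋ :=
  Fin.snoc_last (α := fun _ => ℤ) _ _

theorem inLattice_latticeVector : inLattice K γ (latticeVector K γ a) :=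
  ⟨a, latticeVector_castSucc K γ a, latticeVector_last K γ a⟩

variable {γ a}

theorem latticeVector_ne_zero (ha : a ≠ 0) : latticeVector K γ a ≠ 0 := by
  obtain ⟨k, hk⟩ := Function.ne_iff.mp ha
  exact Function.ne_iff.mpr ⟨k.castSucc, by simpa using hk⟩

theorem sum_sq_latticeVector_lt (ha : a ≠ 0) (hrel : ∑ i, (a i : ℝ) * γ i = 0) :
    ∑ i, latticeVector K γ a i ^ 2 < (∑ i, |a i|) ^ 2 + ∑ i, a i ^ 2 := by
  obtain ⟨k, hk⟩ := Function.ne_iff.mp ha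
  have hrelK : ∑ i, (a i : ℝ) * (K * γ i) = 0 := by
    simp only [mul_left_comm _ (K : ℝ), ← Finset.mul_sum, hrel, mul_zero]
  have hlast : |∑ i, a i * ⌊(K : ℝ) * γ i⌋| < ∑ i, |a i| :=
    abs_sum_mul_floor_lt_sum_abs ⟨k, Finset.mem_univ k, hk⟩ hrelK
  have hlast_sq : (∑ i, a i * ⌊(K : ℝ) * γ i⌋) ^ 2 < (∑ i, |a i|) ^ 2 :=
    sq_lt_sq.mpr (hlast.trans_le (le_abs_self _))
  simpa [Fin.sum_univ_castSucc, add_comm] using hlast_sq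

end LatticeVector

/-- Variable-weight version: if there are integers `α_i`, not all zero, with
`|α_i| ≤ N_i + 1` and `|α_i| = N_i + 1` for at most one `i`, such that
`∑ α_i γ_i = 0`, then `L(K; (γ_1, …, γ_n))` contains a nonzero vector `v` with
`‖v‖² < 2 max_i N_i + 1 + (1 + ∑ N_i)² + ∑ N_i²`. -/
theorem weakly_dependent_short_vector_varying
    (K n : ℕ) (hK : 0 < K) (γ : Fin n → ℝ)
    (N : Fin n → ℕ) (hN : ∀ i, 0 < N i)
    (α : Fin n → ℤ) (hα : α ≠ 0)
    (hbd : ∀ i, |α i| ≤ (N i : ℤ) + 1)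
    (hone : ∀ i j, |α i| = (N i : ℤ) + 1 → |α j| = (N j : ℤ) + 1 → i = j)
    (hrel : ∑ i, (α i : ℝ) * γ i = 0) :
    ∃ v : Fin (n + 1) → ℤ, v ≠ 0 ∧ inLattice K γ v ∧
      (∑ i, ((v i : ℝ)) ^ 2) <
        2 * ((Finset.univ.sup N : ℕ) : ℝ) + 1 + (1 + ∑ i, (N i : ℝ)) ^ 2 +
          ∑ i, (N i : ℝ) ^ 2 := by
  obtain ⟨k, -⟩ := Function.ne_iff.mp hα
  have : Nonempty (Fin n) := ⟨k⟩
  obtain ⟨m, hm⟩ : ∃ m, ∀ i ≠ m, |α i| ≤ N i := exists_forall_ne_le_of_le_add_one hbd hone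
  have habs : ∑ i, |α i| ≤ 1 + ∑ i, (N i : ℤ) :=
    sum_le_add_sum_of_forall_ne_le (Finset.mem_univ m) ((hbd m).trans_eq (add_comm _ _))
      fun i _ => hm i
  have hsq : ∑ i, α i ^ 2 ≤ 2 * (N m : ℤ) + 1 + ∑ i, (N i : ℤ) ^ 2 :=
    sum_sq_le_add_sum_sq_of_forall_ne_abs_le (Finset.mem_univ m) (hbd m) fun i _ => hm i
  have hmax : N m ≤ Finset.univ.sup N := Finset.le_sup (Finset.mem_univ m)
  refine ⟨latticeVector K γ α, latticeVector_ne_zero K hα, inLattice_latticeVector K γ α, ?_⟩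
  have hnorm : ∑ i, latticeVector K γ α i ^ 2 <
      2 * ((Finset.univ.sup N : ℕ) : ℤ) + 1 + (1 + ∑ i, (N i : ℤ)) ^ 2 + ∑ i, (N i : ℤ) ^ 2 := by
    calc ∑ i, latticeVector K γ α i ^ 2
        < (∑ i, |α i|) ^ 2 + ∑ i, α i ^ 2 := sum_sq_latticeVector_lt K hα hrel
      _ ≤ (1 + ∑ i, (N i : ℤ)) ^ 2 + (2 * (N m : ℤ) + 1 + ∑ i, (N i : ℤ) ^ 2) := by gcongr
      _ ≤ _ := by lia
  exact_mod_cast hnorm
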